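/- arXiv:2011.06173 — 2 statements merged into one kernel-verified Lean document; each statement's English description precedes it below -/
import Mathlib

section
/- Let G be a finite simple graph that is 2P4-free, let v1,…,v7 induce a C7 in G with vertex set N0, and suppose that every vertex x outside N0 having a neighbor in N0 satisfies N0(x) = {v_i} or N0(x) = {v_i, v_{i+2}} for some index i. Then every induced path on 4 vertices in G contains at most two vertices of N2 (the set of vertices outside N0 with no neighbor in N0). -/
/-- `a b c d` form an induced path on four vertices in `G`. -/
def IsInducedP4 {V : Type*} (G : SimpleGraph V) (a b c d : V) : Prop :=
  a ≠ b ∧ a ≠ c ∧ a ≠ d ∧ b ≠ c ∧ b ≠ d ∧ c ≠ d ∧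
  G.Adj a b ∧ G.Adj b c ∧ G.Adj c d ∧ ¬ G.Adj a c ∧ ¬ G.Adj a d ∧ ¬ G.Adj b d

/-- `G` is `2P₄`-free. -/
def TwoP4Free {V : Type*} (G : SimpleGraph V) : Prop :=
  ¬ ∃ a₁ a₂ a₃ a₄ b₁ b₂ b₃ b₄ : V,
      IsInducedP4 G a₁ a₂ a₃ a₄ ∧ IsInducedP4 G b₁ b₂ b₃ b₄ ∧
      ∀ u ∈ ({a₁, a₂, a₃, a₄} : Set V), ∀ w ∈ ({b₁, b₂, b₃, b₄} : Set V),
        u ≠ w ∧ ¬ G.Adj u w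

/-- The vertices `v 0, …, v (n-1)` form an induced cycle `C_n` in `G`. -/
def IsInducedCycle {V : Type*} (G : SimpleGraph V) (n : ℕ) (v : ZMod n → V) : Prop :=
  Function.Injective v ∧ ∀ i j : ZMod n, G.Adj (v i) (v j) ↔ (j = i + 1 ∨ i = j + 1)

/-!
Suppose all vertices of an induced `P₄` except possibly one vertex `x` lie in `N₂`. Since `x` has a
neighbor on the path, and that neighbor is in `N₂`, also `x` lies outside the cycle. Hence `x` sees
at most `v i` and `v (i + 2)` for some `i`, and the induced path `v (i + 3), …, v (i + 6)` on the
other side of the cycle is anticomplete to the whole `P₄`, contradicting `2P₄`-freeness. Only one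
property of the cycle matters: each vertex outside it misses some induced `P₄` inside it.
-/

theorem exists_sdiff_singleton_subset_of_ncard_le {α : Type*} {s t : Set α} (hs : s.Nonempty)
    (hfin : s.Finite) (hcard : s.ncard ≤ (s ∩ t).ncard + 1) : ∃ x ∈ s, s \ {x} ⊆ t := by
  have hsdiff : (s \ t).ncard ≤ 1 := by
    have := Set.ncard_inter_add_ncard_sdiff_eq_ncard s t hfin
    omega
  rcases (s \ t).eq_empty_or_nonempty with hempty | ⟨x, hx⟩
  · obtain ⟨x, hx⟩ := hs
    exact ⟨x, hx, Set.sdiff_subset.trans (Set.sdiff_eq_empty.1 hempty)⟩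
  · refine ⟨x, hx.1, fun y hy => by_contra fun hyt => hy.2 ?_⟩
    exact (Set.ncard_le_one hfin.sdiff).1 hsdiff y ⟨hy.1, hyt⟩ x hx

section

variable {V : Type*} {G : SimpleGraph V}

namespace IsInducedP4

variable {a b c d : V}

theorem ncard_eq_four (h : IsInducedP4 G a b c d) : ({a, b, c, d} : Set V).ncard = 4 := by
  obtain ⟨hab, hac, had, hbc, hbd, hcd, -⟩ := h
  rw [Set.ncard_insert_of_notMem (by simp [hab, hac, had]),
    Set.ncard_insert_of_notMem (by simp [hbc, hbd]), Set.ncard_pair hcd]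

theorem exists_adj (h : IsInducedP4 G a b c d) {x : V} (hx : x ∈ ({a, b, c, d} : Set V)) :
    ∃ y ∈ ({a, b, c, d} : Set V), G.Adj x y := by
  obtain ⟨-, -, -, -, -, -, hab, hbc, hcd, -⟩ := h
  rcases hx with rfl | rfl | rfl | rfl
  · exact ⟨b, by simp, hab⟩
  · exact ⟨c, by simp, hbc⟩
  · exact ⟨d, by simp, hcd⟩
  · exact ⟨c, by simp, hcd.symm⟩

end IsInducedP4

namespace IsInducedCycle

variable {n : ℕ} {v : ZMod n → V}

theorem apply_add_natCast_eq_iff (hv : IsInducedCycle G n v) (i : ZMod n) {j k : ℕ}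
    (hj : j < n) (hk : k < n) : v (i + j) = v (i + k) ↔ j = k := by
  rw [hv.1.eq_iff, add_right_inj, ZMod.natCast_eq_natCast_iff', Nat.mod_eq_of_lt hj,
    Nat.mod_eq_of_lt hk]

theorem adj_add_natCast_iff (hv : IsInducedCycle G n v) (i : ZMod n) {j k : ℕ}
    (hj : j + 1 < n) (hk : k + 1 < n) :
    G.Adj (v (i + j)) (v (i + k)) ↔ k = j + 1 ∨ j = k + 1 := by
  rw [hv.2, ← hv.apply_add_natCast_eq_iff i (Nat.lt_of_succ_lt hk) hj,
    ← hv.apply_add_natCast_eq_iff i (Nat.lt_of_succ_lt hj) hk, hv.1.eq_iff, hv.1.eq_iff,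
    Nat.cast_succ, Nat.cast_succ, add_assoc, add_assoc]

theorem isInducedP4 (hv : IsInducedCycle G n v) (hn : 5 ≤ n) (i : ZMod n) :
    IsInducedP4 G (v i) (v (i + 1)) (v (i + 2)) (v (i + 3)) := by
  suffices IsInducedP4 G (v (i + (0 : ℕ))) (v (i + (1 : ℕ))) (v (i + (2 : ℕ)))
      (v (i + (3 : ℕ))) by
    simpa using this
  have heq {j k : ℕ} (hj : j < 4) (hk : k < 4) : v (i + j) = v (i + k) ↔ j = k :=
    hv.apply_add_natCast_eq_iff i (by omega) (by omega)
  have hadj {j k : ℕ} (hj : j < 4) (hk : k < 4) :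
      G.Adj (v (i + j)) (v (i + k)) ↔ k = j + 1 ∨ j = k + 1 :=
    hv.adj_add_natCast_iff i (by omega) (by omega)
  simp (disch := omega) only [IsInducedP4, ne_eq, heq, hadj]
  decide

theorem exists_isInducedP4_subset_range_sdiff_neighborSet (hv : IsInducedCycle G n v)
    (hn : 7 ≤ n) {x : V} {i : ZMod n}
    (hx : {u | u ∈ Set.range v ∧ G.Adj x u} ⊆ {v i, v (i + 2)}) :
    ∃ p q r s, IsInducedP4 G p q r s ∧
      ({p, q, r, s} : Set V) ⊆ Set.range v \ G.neighborSet x := by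
  have hmiss {k : ℕ} (hk : k < 4) : v (i + 3 + k) ∈ Set.range v \ G.neighborSet x := by
    refine ⟨⟨_, rfl⟩, fun hadj => ?_⟩
    have hne {j : ℕ} (hj : j < 3) : v (i + 3 + k) ≠ v (i + j) := by
      have := hv.apply_add_natCast_eq_iff i (j := 3 + k) (k := j) (by omega) (by omega)
      rw [Nat.cast_add, Nat.cast_ofNat, ← add_assoc] at this
      exact fun h => absurd (this.1 h) (by omega)
    rcases hx ⟨⟨_, rfl⟩, hadj⟩ with h | h
    · exact hne (j := 0) (by omega) (by simpa using h)
    · exact hne (j := 2) (by omega) h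
  refine ⟨_, _, _, _, hv.isInducedP4 (by omega) (i + 3), ?_⟩
  rintro _ (rfl | rfl | rfl | rfl)
  · simpa using hmiss (k := 0) (by omega)
  · simpa using hmiss (k := 1) (by omega)
  · exact hmiss (k := 2) (by omega)
  · exact hmiss (k := 3) (by omega)

end IsInducedCycle

theorem exists_neighbors_subset_pair {n : ℕ} {v : ZMod n → V} {x : V}
    (hx : (∃ i, G.Adj x (v i)) →
      ∃ i : ZMod n, {u | u ∈ Set.range v ∧ G.Adj x u} = {v i} ∨
        {u | u ∈ Set.range v ∧ G.Adj x u} = {v i, v (i + 2)}) :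
    ∃ i : ZMod n, {u | u ∈ Set.range v ∧ G.Adj x u} ⊆ {v i, v (i + 2)} := by
  by_cases hadj : ∃ i, G.Adj x (v i)
  · obtain ⟨i, hi | hi⟩ := hx hadj
    · exact ⟨i, hi.trans_subset (by simp)⟩
    · exact ⟨i, hi.subset⟩
  · refine ⟨0, ?_⟩
    rintro _ ⟨⟨j, rfl⟩, hj⟩
    exact absurd ⟨j, hj⟩ hadj

theorem TwoP4Free.not_sdiff_singleton_subset (h2P4 : TwoP4Free G) {S : Set V}
    (hS : ∀ x ∉ S, ∃ p q r s, IsInducedP4 G p q r s ∧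
      ({p, q, r, s} : Set V) ⊆ S \ G.neighborSet x)
    {a b c d : V} (hP : IsInducedP4 G a b c d) {x : V} (hx : x ∈ ({a, b, c, d} : Set V)) :
    ¬ ({a, b, c, d} : Set V) \ {x} ⊆ {u | u ∉ S ∧ ∀ w ∈ S, ¬ G.Adj u w} := by
  intro hfar
  have hxS : x ∉ S := by
    obtain ⟨y, hy, hxy⟩ := hP.exists_adj hx
    exact fun hxS => (hfar ⟨hy, hxy.ne'⟩).2 x hxS hxy.symm
  obtain ⟨p, q, r, s, hQ, hQS⟩ := hS x hxS
  refine h2P4 ⟨a, b, c, d, p, q, r, s, hP, hQ, fun u hu w hw => ?_⟩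
  obtain ⟨hwS, hxw⟩ := hQS hw
  by_cases hux : u = x
  · subst hux
    exact ⟨(ne_of_mem_of_not_mem hwS hxS).symm, hxw⟩
  · obtain ⟨huS, huw⟩ := hfar ⟨hu, hux⟩
    exact ⟨(ne_of_mem_of_not_mem hwS huS).symm, huw w hwS⟩

theorem stmt2_general (h2P4 : TwoP4Free G) {S : Set V}
    (hS : ∀ x ∉ S, ∃ p q r s, IsInducedP4 G p q r s ∧
      ({p, q, r, s} : Set V) ⊆ S \ G.neighborSet x)
    {a b c d : V} (hP : IsInducedP4 G a b c d) :
    (({a, b, c, d} : Set V) ∩ {u | u ∉ S ∧ ∀ w ∈ S, ¬ G.Adj u w}).ncard ≤ 2 := by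
  by_contra! hcard
  obtain ⟨x, hx, hfar⟩ := exists_sdiff_singleton_subset_of_ncard_le (Set.insert_nonempty a _)
    (Set.toFinite _) (hP.ncard_eq_four.trans_le (Nat.succ_le_succ hcard))
  exact h2P4.not_sdiff_singleton_subset hS hP hx hfar

end

theorem stmt2 {V : Type*} [Fintype V] (G : SimpleGraph V) (h2P4 : TwoP4Free G)
    (v : ZMod 7 → V) (hv : IsInducedCycle G 7 v)
    (hN1 : ∀ x, x ∉ Set.range v → (∃ i, G.Adj x (v i)) →
      ∃ i : ZMod 7, {u | u ∈ Set.range v ∧ G.Adj x u} = {v i} ∨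
        {u | u ∈ Set.range v ∧ G.Adj x u} = {v i, v (i + 2)})
    (a b c d : V) (hP : IsInducedP4 G a b c d) :
    (({a, b, c, d} : Set V) ∩ {u | u ∉ Set.range v ∧ ∀ i, ¬ G.Adj u (v i)}).ncard ≤ 2 := by
  simpa only [Set.forall_mem_range] using stmt2_general h2P4 (fun x hx =>
    (exists_neighbors_subset_pair (hN1 x hx)).elim fun _ hi =>
      hv.exists_isInducedP4_subset_range_sdiff_neighborSet le_rfl hi) hP
end

section
/- Let G be a finite simple graph and let N2 and R be disjoint sets of vertices such that: the subgraph induced by R∪N2 is P4-free; the subgraph induced by R is bipartite; and any two adjacent vertices of R have no common neighbor in R∪N2. Let x and y be adjacent vertices of R, write X' = N(x)∩N2 and Y' = N(y)∩N2, and assume that every vertex of G having a neighbor in X'∪Y' belongs to R∪N2. Then there exist disjoint sets X, Y ⊆ R with x∈X and y∈Y satisfying: (1) every vertex of X∪Y' is adjacent to every vertex of Y∪X'; (2) X and Y are independent sets of G; (3) every neighbor of a vertex of X'∪Y' belongs to X∪Y∪X'∪Y'. -/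
/-!
In a `P₄`-free graph, an edge `xy` without common neighbors dominates its connected component: a
path `w u x y` must have one of the chords `wx`, `uy` or `wy`, and `uy` is excluded since it makes
`u` a common neighbor of `x` and `y`. The same argument applied to a path `a y x b` yields the edge
`ab`, so `N(y)` is complete to `N(x)`. Hence `X = N(y) ∩ R` and `Y = N(x) ∩ R` have the required
properties; they are independent because an edge inside one of them would give a triangle in `R`.
-/

/-- The subgraph of `G` induced by `S` is `P₄`-free. The set is kept as a parameter, rather than
passing to the induced subgraph, so that vertices of different sets live in the same type. -/
def IsP4FreeOn {V : Type*} (G : SimpleGraph V) (S : Set V) : Prop :=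
  ∀ a b c d : V, a ∈ S → b ∈ S → c ∈ S → d ∈ S → ¬ IsInducedP4 G a b c d

section

variable {V : Type*} {G : SimpleGraph V}

theorem IsInducedP4.of_adj {a b c d : V} (hab : G.Adj a b) (hbc : G.Adj b c) (hcd : G.Adj c d)
    (hac : ¬ G.Adj a c) (had : ¬ G.Adj a d) (hbd : ¬ G.Adj b d) : IsInducedP4 G a b c d := by
  have hne_ac : a ≠ c := by
    rintro rfl
    exact had hcd
  have hne_ad : a ≠ d := by
    rintro rfl
    exact hbd hab.symm
  have hne_bd : b ≠ d := by
    rintro rfl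
    exact had hab
  exact ⟨hab.ne, hne_ac, hne_ad, hbc.ne, hne_bd, hcd.ne, hab, hbc, hcd, hac, had, hbd⟩

namespace IsP4FreeOn

variable {S : Set V} {x y : V}

theorem adj_or_adj_of_not_adj (hS : IsP4FreeOn G S) {a b c d : V}
    (ha : a ∈ S) (hb : b ∈ S) (hc : c ∈ S) (hd : d ∈ S)
    (hab : G.Adj a b) (hbc : G.Adj b c) (hcd : G.Adj c d) (hbd : ¬ G.Adj b d) :
    G.Adj a c ∨ G.Adj a d := by
  by_contra! ⟨hac, had⟩
  exact hS a b c d ha hb hc hd (.of_adj hab hbc hcd hac had hbd)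

theorem isCompleteBetween_neighborSet_inter (hS : IsP4FreeOn G S) (hx : x ∈ S) (hy : y ∈ S)
    (hxy : G.Adj x y) (hcommon : ∀ w ∈ S, ¬ (G.Adj w x ∧ G.Adj w y)) :
    G.IsCompleteBetween (G.neighborSet y ∩ S) (G.neighborSet x ∩ S) := by
  rintro a ⟨hya, ha⟩ b ⟨hxb, hb⟩
  have hax : ¬ G.Adj a x := fun hax => hcommon a ha ⟨hax, hya.symm⟩
  have hyb : ¬ G.Adj y b := fun hyb => hcommon b hb ⟨hxb.symm, hyb.symm⟩
  exact (hS.adj_or_adj_of_not_adj ha hy hx hb hya.symm hxy.symm hxb hyb).resolve_left hax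

theorem mem_neighborSet_union_of_adj (hS : IsP4FreeOn G S) (hx : x ∈ S) (hy : y ∈ S)
    (hxy : G.Adj x y) {u w : V} (hu : u ∈ S) (hw : w ∈ S)
    (huxy : u ∈ G.neighborSet x ∪ G.neighborSet y) (hcommon : ¬ (G.Adj u x ∧ G.Adj u y))
    (huw : G.Adj u w) :
    w ∈ G.neighborSet x ∪ G.neighborSet y := by
  rcases huxy with hxu | hyu
  · have huy : ¬ G.Adj u y := fun huy => hcommon ⟨hxu.symm, huy⟩
    exact (hS.adj_or_adj_of_not_adj hw hu hx hy huw.symm hxu.symm hxy huy).imp .symm .symm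
  · have hux : ¬ G.Adj u x := fun hux => hcommon ⟨hux, hyu.symm⟩
    exact (hS.adj_or_adj_of_not_adj hw hu hy hx huw.symm hyu.symm hxy.symm hux).symm.imp .symm .symm

end IsP4FreeOn

theorem stmt6_general {N2 R : Set V} (hP4free : IsP4FreeOn G (R ∪ N2))
    (hnocommon : ∀ a ∈ R, ∀ b ∈ R, G.Adj a b →
      ∀ w ∈ R ∪ N2, ¬ (G.Adj w a ∧ G.Adj w b))
    {x y : V} (hx : x ∈ R) (hy : y ∈ R) (hxy : G.Adj x y)
    (hclosed : ∀ w u : V,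
      u ∈ (G.neighborSet x ∩ N2) ∪ (G.neighborSet y ∩ N2) → G.Adj w u → w ∈ R ∪ N2) :
    ∃ X Y : Set V, Disjoint X Y ∧ X ⊆ R ∧ Y ⊆ R ∧ x ∈ X ∧ y ∈ Y ∧
      (∀ a ∈ X ∪ (G.neighborSet y ∩ N2), ∀ b ∈ Y ∪ (G.neighborSet x ∩ N2), G.Adj a b) ∧
      (∀ a ∈ X, ∀ b ∈ X, ¬ G.Adj a b) ∧ (∀ a ∈ Y, ∀ b ∈ Y, ¬ G.Adj a b) ∧
      (∀ u ∈ (G.neighborSet x ∩ N2) ∪ (G.neighborSet y ∩ N2), ∀ w : V, G.Adj u w →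
        w ∈ X ∪ Y ∪ (G.neighborSet x ∩ N2) ∪ (G.neighborSet y ∩ N2)) := by
  have hxS : x ∈ R ∪ N2 := .inl hx
  have hyS : y ∈ R ∪ N2 := .inl hy
  have hcommon : ∀ w ∈ R ∪ N2, ¬ (G.Adj w x ∧ G.Adj w y) := hnocommon x hx y hy hxy
  have hcomplete : G.IsCompleteBetween (G.neighborSet y ∩ (R ∪ N2)) (G.neighborSet x ∩ (R ∪ N2)) :=
    hP4free.isCompleteBetween_neighborSet_inter hxS hyS hxy hcommon
  have hindep : ∀ v ∈ R ∪ N2, ∀ a ∈ G.neighborSet v ∩ R, ∀ b ∈ G.neighborSet v ∩ R,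
      ¬ G.Adj a b := fun v hv a ha b hb hab => hnocommon a ha.2 b hb.2 hab v hv ⟨ha.1, hb.1⟩
  refine ⟨G.neighborSet y ∩ R, G.neighborSet x ∩ R, ?disjoint, Set.inter_subset_right,
    Set.inter_subset_right, ⟨hxy.symm, hx⟩, ⟨hxy, hy⟩, ?complete, hindep y hyS, hindep x hxS,
    ?neighbors⟩
  case disjoint =>
    exact hcomplete.disjoint.mono (Set.inter_subset_inter_right _ Set.subset_union_left)
      (Set.inter_subset_inter_right _ Set.subset_union_left)
  case complete =>
    simp only [← Set.inter_union_distrib_left]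
    exact hcomplete
  case neighbors =>
    intro u hu w huw
    have huS : u ∈ R ∪ N2 := .inr (hu.elim And.right And.right)
    have hwS : w ∈ R ∪ N2 := hclosed w u hu huw.symm
    have hwxy : w ∈ G.neighborSet x ∪ G.neighborSet y :=
      hP4free.mem_neighborSet_union_of_adj hxS hyS hxy huS hwS
        (hu.imp And.left And.left) (hcommon u huS) huw
    simp only [Set.mem_union, Set.mem_inter_iff] at hwS hwxy ⊢
    tauto

end

theorem stmt6 {V : Type*} [Fintype V] (G : SimpleGraph V)
    (N2 R : Set V) (hdisj : Disjoint R N2)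
    -- the subgraph induced by `R ∪ N2` is `P₄`-free
    (hP4free : ∀ a b c d : V, a ∈ R ∪ N2 → b ∈ R ∪ N2 → c ∈ R ∪ N2 → d ∈ R ∪ N2 →
      ¬ IsInducedP4 G a b c d)
    -- the subgraph induced by `R` is bipartite
    (hbip : ∃ A B : Set V, A ∪ B = R ∧ Disjoint A B ∧
      (∀ a ∈ A, ∀ b ∈ A, ¬ G.Adj a b) ∧ (∀ a ∈ B, ∀ b ∈ B, ¬ G.Adj a b))
    -- adjacent vertices of `R` have no common neighbor in `R ∪ N2`
    (hnocommon : ∀ a ∈ R, ∀ b ∈ R, G.Adj a b →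
      ∀ w ∈ R ∪ N2, ¬ (G.Adj w a ∧ G.Adj w b))
    (x y : V) (hx : x ∈ R) (hy : y ∈ R) (hxy : G.Adj x y)
    -- every vertex with a neighbor in `X' ∪ Y'` belongs to `R ∪ N2`
    (hclosed : ∀ w u : V,
      u ∈ (G.neighborSet x ∩ N2) ∪ (G.neighborSet y ∩ N2) → G.Adj w u → w ∈ R ∪ N2) :
    ∃ X Y : Set V, Disjoint X Y ∧ X ⊆ R ∧ Y ⊆ R ∧ x ∈ X ∧ y ∈ Y ∧
      -- (1) every vertex of `X ∪ Y'` is adjacent to every vertex of `Y ∪ X'`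
      (∀ a ∈ X ∪ (G.neighborSet y ∩ N2), ∀ b ∈ Y ∪ (G.neighborSet x ∩ N2), G.Adj a b) ∧
      -- (2) `X` and `Y` are independent sets of `G`
      (∀ a ∈ X, ∀ b ∈ X, ¬ G.Adj a b) ∧ (∀ a ∈ Y, ∀ b ∈ Y, ¬ G.Adj a b) ∧
      -- (3) every neighbor of a vertex of `X' ∪ Y'` belongs to `X ∪ Y ∪ X' ∪ Y'`
      (∀ u ∈ (G.neighborSet x ∩ N2) ∪ (G.neighborSet y ∩ N2), ∀ w : V, G.Adj u w →
        w ∈ X ∪ Y ∪ (G.neighborSet x ∩ N2) ∪ (G.neighborSet y ∩ N2)) :=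
  stmt6_general hP4free hnocommon hx hy hxy hclosed
end
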